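/- arXiv:2508.05828 — 8 statements merged into one kernel-verified Lean document; each statement's English description precedes it below -/
import Mathlib

section
/- For every nonempty type α, the free semigroup FreeSemigroup α is not a retract of its ultrapower over the hyperfilter on ℕ: there is no multiplication-preserving map r : Filter.Germ (Filter.hyperfilter ℕ) (FreeSemigroup α) → FreeSemigroup α (i.e., r (x * y) = r x * r y for all germs x, y) satisfying r (↑w) = w for every w : FreeSemigroup α, where ↑w denotes the constant germ. -/
/-- The word consisting of `n + 1` copies of the letter `a`. -/
def powWord {α : Type*} (a : α) : ℕ → FreeSemigroup α
  | 0 => FreeSemigroup.of a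
  | n + 1 => FreeSemigroup.of a * powWord a n

theorem powWord_length {α : Type*} (a : α) (n : ℕ) : (powWord a n).length = n + 1 := by
  induction n with
  | zero => rfl
  | succ n ih => simp only [powWord, FreeSemigroup.length_mul, ih, FreeSemigroup.length_of]; omega

theorem powWord_add {α : Type*} (a : α) (k m : ℕ) :
    powWord a (k + 1 + m) = powWord a k * powWord a m := by
  induction k with
  | zero => rw [show 0 + 1 + m = m + 1 by omega]; rfl
  | succ k ih =>
    rw [show k + 1 + 1 + m = (k + 1 + m) + 1 by omega]
    simp only [powWord, ih, mul_assoc]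

/-- No free semigroup on a nonempty type is a retract of its ultrapower (enlargement)
over the hyperfilter on ℕ. -/
theorem stmt_1 (α : Type*) [Nonempty α] :
    ¬ ∃ r : Filter.Germ (Filter.hyperfilter ℕ : Filter ℕ) (FreeSemigroup α) → FreeSemigroup α,
        (∀ x y, r (x * y) = r x * r y) ∧ (∀ w : FreeSemigroup α, r ↑w = w) := by
  rintro ⟨r, hmul, hr⟩
  obtain ⟨a⟩ := ‹Nonempty α›
  let X : Filter.Germ (Filter.hyperfilter ℕ : Filter ℕ) (FreeSemigroup α) :=
    Filter.Germ.ofFun (powWord a)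
  obtain ⟨k, hk⟩ : ∃ k, k = (r X).length := ⟨_, rfl⟩
  let Y : Filter.Germ (Filter.hyperfilter ℕ : Filter ℕ) (FreeSemigroup α) :=
    Filter.Germ.ofFun (fun n => powWord a (n - (k + 1)))
  have hX : X = (↑(powWord a k)) * Y := by
    refine Filter.Germ.coe_eq.2 ?_
    have h : ∀ᶠ n in (Filter.hyperfilter ℕ : Filter ℕ), k + 1 ≤ n :=
      Nat.hyperfilter_le_atTop (Filter.eventually_ge_atTop (k + 1))
    filter_upwards [h] with n hn
    show powWord a n = powWord a k * powWord a (n - (k + 1))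
    rw [← powWord_add, Nat.add_sub_cancel' hn]
  have h2 := congrArg FreeSemigroup.length (congrArg r hX)
  rw [hmul, hr, FreeSemigroup.length_mul, powWord_length] at h2
  omega
end

section
/- There exists a hypernatural N : Filter.Germ (Filter.hyperfilter ℕ) ℕ such that N is not equal to the constant germ ↑m for any m : ℕ, and for every natural number n with 0 < n, the constant germ ↑n divides N in the multiplicative monoid Filter.Germ (Filter.hyperfilter ℕ) ℕ. -/
/-- Overspill example: there is a nonstandard hypernatural divisible by every positive
standard natural number. -/
theorem stmt_2 :
    ∃ N : Filter.Germ (Filter.hyperfilter ℕ : Filter ℕ) ℕ,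
      (∀ m : ℕ, N ≠ ↑m) ∧ (∀ n : ℕ, 0 < n → (↑n : Filter.Germ (Filter.hyperfilter ℕ : Filter ℕ) ℕ) ∣ N) := by
  have key : ∀ n : ℕ, ∀ᶠ k in (Filter.hyperfilter ℕ : Filter ℕ), n < k := fun n =>
    (Nat.hyperfilter_le_atTop) (Filter.eventually_gt_atTop n)
  refine ⟨((fun k => Nat.factorial k : ℕ → ℕ) : Filter.Germ (Filter.hyperfilter ℕ : Filter ℕ) ℕ), ?_, ?_⟩
  · intro m h
    have h' : ∀ᶠ k in (Filter.hyperfilter ℕ : Filter ℕ), Nat.factorial k = m :=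
      Filter.Germ.coe_eq.1 h
    obtain ⟨k, hk, hm⟩ := (h'.and (key m)).exists
    have := Nat.self_le_factorial k
    omega
  · intro n hn
    refine ⟨((fun k => Nat.factorial k / n : ℕ → ℕ) : Filter.Germ (Filter.hyperfilter ℕ : Filter ℕ) ℕ), ?_⟩
    refine Filter.Germ.coe_eq.2 ?_
    filter_upwards [key n] with k hk
    exact (Nat.mul_div_cancel' (Nat.dvd_factorial hn hk.le)).symm
end

section
/- There exists a hypernatural ψ : Filter.Germ (Filter.hyperfilter ℕ) ℕ such that ψ is not equal to the constant germ ↑m for any m : ℕ, and ψ is a prime element (in the sense of the predicate Prime) of the commutative monoid with zero Filter.Germ (Filter.hyperfilter ℕ) ℕ. -/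
theorem germ_dvd_iff_aux (l : Filter ℕ) (f g : ℕ → ℕ) :
    ((f : Filter.Germ l ℕ) ∣ (g : Filter.Germ l ℕ)) ↔ ∀ᶠ n in l, f n ∣ g n := by
  constructor
  · rintro ⟨c, hc⟩
    induction c using Filter.Germ.inductionOn with
    | _ c =>
      rw [← Filter.Germ.coe_mul, Filter.Germ.coe_eq] at hc
      filter_upwards [hc] with n hn
      exact ⟨c n, hn⟩
  · intro h
    refine ⟨((fun n => g n / f n : ℕ → ℕ) : Filter.Germ l ℕ), ?_⟩
    rw [← Filter.Germ.coe_mul, Filter.Germ.coe_eq]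
    filter_upwards [h] with n hn
    exact (Nat.mul_div_cancel' hn).symm

/-- There exists an infinite (nonstandard) prime hypernatural in the ultrapower of ℕ
over the hyperfilter. -/
theorem stmt_3 :
    ∃ ψ : Filter.Germ (Filter.hyperfilter ℕ : Filter ℕ) ℕ,
      (∀ m : ℕ, ψ ≠ ↑m) ∧ Prime ψ := by
  choose p hp hpp using fun n : ℕ => Nat.exists_infinite_primes (n + 1)
  have key : ∀ m : ℕ, ¬ ∀ᶠ n in (Filter.hyperfilter ℕ : Filter ℕ), p n = m := by
    intro m h
    have h2 : ∀ᶠ n in (Filter.hyperfilter ℕ : Filter ℕ), m ≤ n :=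
      (Nat.hyperfilter_le_atTop) (Filter.eventually_ge_atTop m)
    obtain ⟨n, h1, h2⟩ := (h.and h2).exists
    have := hp n
    omega
  refine ⟨((p : ℕ → ℕ) : Filter.Germ (Filter.hyperfilter ℕ : Filter ℕ) ℕ), ?_, ?_, ?_, ?_⟩
  · intro m h
    exact key m (Filter.Germ.coe_eq.1 h)
  · intro h
    exact key 0 (Filter.Germ.coe_eq.1 h)
  · intro h
    have h1 := (germ_dvd_iff_aux _ p (fun _ => 1)).1 (isUnit_iff_dvd_one.1 h)
    obtain ⟨n, hn⟩ := h1.exists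
    exact (hpp n).one_lt.ne' (Nat.dvd_one.1 hn)
  · intro a b
    induction a using Filter.Germ.inductionOn with
    | _ a =>
    induction b using Filter.Germ.inductionOn with
    | _ b =>
      rw [← Filter.Germ.coe_mul, germ_dvd_iff_aux, germ_dvd_iff_aux, germ_dvd_iff_aux,
        ← Ultrafilter.eventually_or]
      intro h
      filter_upwards [h] with n hn
      exact (hpp n).dvd_mul.1 hn
end

section
/- There is no map r : Filter.Germ (Filter.hyperfilter ℕ) ℕ → ℕ satisfying all of: r (Filter.Germ.map₂ max x y) = max (r x) (r y) and r (Filter.Germ.map₂ min x y) = min (r x) (r y) for all germs x, y, together with r (↑n) = n for every n : ℕ. That is, the lattice of natural numbers under the usual order is not a retract of its ultrapower over the hyperfilter. -/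
/-- The lattice of natural numbers under the usual ordering is not a retract of its
ultrapower over the hyperfilter. -/
theorem stmt_4 :
    ¬ ∃ r : Filter.Germ (Filter.hyperfilter ℕ : Filter ℕ) ℕ → ℕ,
        (∀ x y, r (Filter.Germ.map₂ max x y) = max (r x) (r y)) ∧
        (∀ x y, r (Filter.Germ.map₂ min x y) = min (r x) (r y)) ∧
        (∀ n : ℕ, r ↑n = n) := by
  rintro ⟨r, hmax, -, hr⟩
  let w : Filter.Germ (Filter.hyperfilter ℕ : Filter ℕ) ℕ := ((fun n : ℕ => n : ℕ → ℕ) : Filter.Germ _ ℕ)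
  have key : ∀ k : ℕ, Filter.Germ.map₂ max w (k : Filter.Germ (Filter.hyperfilter ℕ : Filter ℕ) ℕ) = w := by
    intro k
    refine Filter.Germ.coe_eq.2 ?_
    have h : ∀ᶠ n in (Filter.hyperfilter ℕ : Filter ℕ), k ≤ n :=
      Nat.hyperfilter_le_atTop (Filter.eventually_ge_atTop k)
    filter_upwards [h] with n hn
    exact max_eq_left hn
  have h := hmax w ((r w + 1 : ℕ) : Filter.Germ (Filter.hyperfilter ℕ : Filter ℕ) ℕ)
  rw [key, hr] at h
  omega
end

section
/- There is no map r : Filter.Germ (Filter.hyperfilter ℕ) ℕ → ℕ satisfying all of: r (Filter.Germ.map₂ Nat.gcd x y) = Nat.gcd (r x) (r y) and r (Filter.Germ.map₂ Nat.lcm x y) = Nat.lcm (r x) (r y) for all germs x, y, together with r (↑n) = n for every n : ℕ. That is, the lattice of natural numbers under the divisibility ordering (with meet gcd and join lcm) is not a retract of its ultrapower over the hyperfilter. -/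
/-- The lattice of natural numbers under the divisibility ordering (meet `gcd`, join `lcm`)
is not a retract of its ultrapower over the hyperfilter. -/
theorem stmt_5 :
    ¬ ∃ r : Filter.Germ (Filter.hyperfilter ℕ : Filter ℕ) ℕ → ℕ,
        (∀ x y, r (Filter.Germ.map₂ Nat.gcd x y) = Nat.gcd (r x) (r y)) ∧
        (∀ x y, r (Filter.Germ.map₂ Nat.lcm x y) = Nat.lcm (r x) (r y)) ∧
        (∀ n : ℕ, r ↑n = n) := by
  rintro ⟨r, hg, -, hc⟩
  let f : ℕ → ℕ := fun n => ∏ i ∈ Finset.range n, (2 * i + 1)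
  let x : Filter.Germ (Filter.hyperfilter ℕ : Filter ℕ) ℕ := Filter.Germ.ofFun f
  have key : ∀ a b : ℕ, (∀ᶠ n in Filter.cofinite, Nat.gcd (f n) a = b) →
      Nat.gcd (r x) a = b := by
    intro a b h
    have h1 := hg x (a : Filter.Germ (Filter.hyperfilter ℕ : Filter ℕ) ℕ)
    have h2 : Filter.Germ.map₂ Nat.gcd x (a : Filter.Germ (Filter.hyperfilter ℕ : Filter ℕ) ℕ)
        = (b : Filter.Germ (Filter.hyperfilter ℕ : Filter ℕ) ℕ) :=
      Filter.Germ.coe_eq.2 (Filter.hyperfilter_le_cofinite h)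
    rw [h2] at h1
    have ha : r (a : Filter.Germ (Filter.hyperfilter ℕ : Filter ℕ) ℕ) = a := hc a
    have hb : r (b : Filter.Germ (Filter.hyperfilter ℕ : Filter ℕ) ℕ) = b := hc b
    rw [ha, hb] at h1
    exact h1.symm
  have hodd : ∀ m : ℕ, (2 * m + 1) ∣ r x := by
    intro m
    rw [← Nat.gcd_eq_right_iff_dvd]
    apply key
    rw [Nat.cofinite_eq_atTop]
    filter_upwards [Filter.eventually_gt_atTop m] with n hn
    exact Nat.gcd_eq_right (Finset.dvd_prod_of_mem (fun i => 2 * i + 1) (Finset.mem_range.2 hn))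
  have h0 : r x = 0 := Nat.eq_zero_of_dvd_of_lt (hodd (r x)) (by omega)
  have h2 : Nat.gcd (r x) 2 = 1 := by
    apply key
    refine Filter.Eventually.of_forall fun n => ?_
    exact Nat.Coprime.prod_left fun i _ => by simp
  rw [h0] at h2
  simp at h2
end

section
/- There is no ring homomorphism r : Filter.Germ (Filter.hyperfilter ℕ) ℤ →+* ℤ with r (↑k) = k for every k : ℤ. That is, the ring of integers is not a retract of its ultrapower *ℤ over the hyperfilter (which, since ℤ is finitely generated as a ring, equals its extension monad). -/
/-- The ring of integers is not a retract of its ultrapower (= extension monad) over the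
hyperfilter: no ring homomorphism from *ℤ to ℤ fixes all constant germs. -/
theorem stmt_6 :
    ¬ ∃ r : Filter.Germ (Filter.hyperfilter ℕ : Filter ℕ) ℤ →+* ℤ,
        ∀ k : ℤ, r ↑k = k := by
  rintro ⟨r, -⟩
  let φ : (ℕ → ℤ) →+* ℤ :=
    r.comp (Filter.Germ.coeRingHom (Filter.hyperfilter ℕ : Filter ℕ))
  let w : ℕ → ℤ := fun n => (n : ℤ)
  let k : ℤ := φ w + 1
  choose a b c d h using fun n : ℕ => Nat.sum_four_squares ((n : ℤ) - k).toNat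
  let A : ℕ → ℤ := fun n => (a n : ℤ)
  let B : ℕ → ℤ := fun n => (b n : ℤ)
  let C : ℕ → ℤ := fun n => (c n : ℤ)
  let D : ℕ → ℤ := fun n => (d n : ℤ)
  have key : φ (w - (k : ℕ → ℤ)) = φ (A ^ 2 + B ^ 2 + C ^ 2 + D ^ 2) := by
    refine congrArg r (Filter.Germ.coe_eq.2 ?_)
    refine Filter.Eventually.filter_mono Nat.hyperfilter_le_atTop ?_
    filter_upwards [Filter.eventually_ge_atTop k.toNat] with n hn
    have h1 : (((n : ℤ) - k).toNat : ℤ) = (n : ℤ) - k := by omega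
    have h2 := h n
    zify at h2
    rw [h1] at h2
    simpa [A, B, C, D, w] using h2.symm
  rw [map_sub, map_intCast] at key
  simp only [map_add, map_pow] at key
  have hk : φ w - k = -1 := by simp [k]
  have : (((k : ℤ) : ℤ)) = k := rfl
  simp only [Int.cast_id] at key
  nlinarith [sq_nonneg (φ A), sq_nonneg (φ B), sq_nonneg (φ C), sq_nonneg (φ D)]
end

section
/- There is no additive map r : Filter.Germ (Filter.hyperfilter ℕ) ℤ → ℤ (i.e., r (x + y) = r x + r y for all germs x, y) with r (↑k) = k for every k : ℤ. That is, the additive semigroup of integers is not a retract of its ultrapower *ℤ over the hyperfilter (which, since ℤ is finitely generated as an additive semigroup, equals its extension monad). -/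
theorem helper_zero (r : Filter.Germ (Filter.hyperfilter ℕ : Filter ℕ) ℤ →+ ℤ) (p : ℕ) (hp : 2 ≤ p)
    (b : ℕ → ℤ) :
    r ((fun n => (p : ℤ) ^ n * b n : ℕ → ℤ) : Filter.Germ (Filter.hyperfilter ℕ : Filter ℕ) ℤ) = 0 := by
  set z := r ((fun n => (p : ℤ) ^ n * b n : ℕ → ℤ) :
    Filter.Germ (Filter.hyperfilter ℕ : Filter ℕ) ℤ) with hz
  have key : ∀ k : ℕ, ((p : ℤ) ^ k) ∣ z := by
    intro k
    refine ⟨r ((fun n => (p : ℤ) ^ (n - k) * b n : ℕ → ℤ) :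
      Filter.Germ (Filter.hyperfilter ℕ : Filter ℕ) ℤ), ?_⟩
    have h1 : ((fun n => (p : ℤ) ^ n * b n : ℕ → ℤ) :
        Filter.Germ (Filter.hyperfilter ℕ : Filter ℕ) ℤ) =
        (p ^ k) • ((fun n => (p : ℤ) ^ (n - k) * b n : ℕ → ℤ) :
          Filter.Germ (Filter.hyperfilter ℕ : Filter ℕ) ℤ) := by
      rw [← Filter.Germ.coe_smul]
      refine Filter.Germ.coe_eq.2 ?_
      have h2 : ∀ᶠ n in (Filter.hyperfilter ℕ : Filter ℕ), k ≤ n :=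
        Nat.hyperfilter_le_atTop (Filter.eventually_ge_atTop k)
      filter_upwards [h2] with n hn
      simp only [Pi.smul_apply, nsmul_eq_mul, Nat.cast_pow]
      rw [← mul_assoc, ← pow_add, Nat.add_sub_cancel' hn]
    rw [hz, h1, map_nsmul]
    simp
  by_contra hne
  have h3 := Int.le_of_dvd (abs_pos.2 hne) ((dvd_abs _ _).2 (key z.natAbs))
  have h4 : z.natAbs < p ^ z.natAbs := Nat.lt_pow_self (by omega)
  have h5 : ((z.natAbs : ℕ) : ℤ) < (p : ℤ) ^ z.natAbs := by exact_mod_cast h4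
  rw [Int.natCast_natAbs] at h5
  exact absurd h3 (not_le.2 h5)

theorem helper_main (r : Filter.Germ (Filter.hyperfilter ℕ : Filter ℕ) ℤ →+ ℤ) :
    r (((1 : ℤ)) : Filter.Germ (Filter.hyperfilter ℕ : Filter ℕ) ℤ) = 0 := by
  have hc : ∀ n : ℕ, ∃ u v : ℤ, u * ((2 : ℕ) : ℤ) ^ n + v * ((3 : ℕ) : ℤ) ^ n = 1 := by
    intro n
    have : IsCoprime (((2 : ℕ) : ℤ)) ((3 : ℕ) : ℤ) := ⟨-1, 1, by norm_num⟩
    exact this.pow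
  choose u v huv using hc
  have h : (((1 : ℤ)) : Filter.Germ (Filter.hyperfilter ℕ : Filter ℕ) ℤ) =
      ((fun n => ((2 : ℕ) : ℤ) ^ n * u n : ℕ → ℤ) : Filter.Germ (Filter.hyperfilter ℕ : Filter ℕ) ℤ) +
      ((fun n => ((3 : ℕ) : ℤ) ^ n * v n : ℕ → ℤ) : Filter.Germ (Filter.hyperfilter ℕ : Filter ℕ) ℤ) := by
    rw [← Filter.Germ.coe_add]
    refine Filter.Germ.coe_eq.2 (Filter.Eventually.of_forall fun n => ?_)
    have := huv n
    simp only [Pi.add_apply, Pi.intCast_apply, Int.cast_one]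
    linarith
  rw [h, map_add, helper_zero r 2 (by norm_num), helper_zero r 3 (by norm_num), add_zero]

/-- The additive semigroup of integers is not a retract of its ultrapower (= extension
monad) over the hyperfilter. -/
theorem stmt_7 :
    ¬ ∃ r : Filter.Germ (Filter.hyperfilter ℕ : Filter ℕ) ℤ → ℤ,
        (∀ x y, r (x + y) = r x + r y) ∧ (∀ k : ℤ, r ↑k = k) := by
  rintro ⟨r, hadd, hr⟩
  have h0 := helper_main (AddMonoidHom.mk' r hadd)
  have h1 := hr 1
  have h2 : r (((1 : ℤ)) : Filter.Germ (Filter.hyperfilter ℕ : Filter ℕ) ℤ) = 0 := h0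
  rw [h2] at h1
  exact absurd h1 (by norm_num)
end

section
/- Let u be an ultrafilter on ℕ and let A and B be semigroups. Suppose there are multiplication-preserving maps rA : Filter.Germ (↑u) A → A and rB : Filter.Germ (↑u) B → B with rA (↑a) = a for all a : A and rB (↑b) = b for all b : B. Then there exists a multiplication-preserving map r : Filter.Germ (↑u) (A × B) → A × B with r (↑p) = p for all p : A × B. That is, if A is a retract of its ultrapower and B is a retract of its ultrapower, then A × B is a retract of its ultrapower. -/
/-- If the semigroups `A` and `B` are retracts of their ultrapowers over an ultrafilter `u`
on ℕ, then so is the direct product `A × B`. -/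
theorem stmt_9 (u : Ultrafilter ℕ) (A B : Type*) [Semigroup A] [Semigroup B]
    (rA : Filter.Germ (↑u : Filter ℕ) A → A) (rB : Filter.Germ (↑u : Filter ℕ) B → B)
    (hA : ∀ x y, rA (x * y) = rA x * rA y) (hA' : ∀ a : A, rA ↑a = a)
    (hB : ∀ x y, rB (x * y) = rB x * rB y) (hB' : ∀ b : B, rB ↑b = b) :
    ∃ r : Filter.Germ (↑u : Filter ℕ) (A × B) → A × B,
      (∀ x y, r (x * y) = r x * r y) ∧ (∀ p : A × B, r ↑p = p) := by
  refine ⟨fun x => (rA (x.map Prod.fst), rB (x.map Prod.snd)), ?_, ?_⟩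
  · intro x y
    induction x using Filter.Germ.inductionOn with
    | _ f =>
      induction y using Filter.Germ.inductionOn with
      | _ g =>
        refine Prod.ext ?_ ?_
        · exact hA (Filter.Germ.ofFun (fun n => (f n).1)) (Filter.Germ.ofFun (fun n => (g n).1))
        · exact hB (Filter.Germ.ofFun (fun n => (f n).2)) (Filter.Germ.ofFun (fun n => (g n).2))
  · intro p
    exact Prod.ext (hA' p.1) (hB' p.2)
end
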